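/- arXiv:1911.01851 — 3 statements merged into one kernel-verified Lean document; each statement's English description precedes it below -/
import Mathlib

section
/- Let w be a nonempty word over a totally ordered alphabet Σ that is not an inverse Lyndon word, and let ICFL(w) = (m1, …, mk). Let i be an integer with 1 < i ≤ k, and suppose that for each h with 1 ≤ h ≤ i−1 there are words r_h, s_h, t_h and letters a_h < b_h such that m_h = r_h a_h s_h and m_i = r_h b_h t_h. Then the word r_{i−1} b_{i−1} is not a factor of m_1 m_2 ⋯ m_{i−1}. -/
/-!
Write `x ≪ y` when `x` is strictly below `y` at the first letter where they differ. The factors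
of `ICFL(w)` are inverse Lyndon words forming a `≪`-increasing sequence whose product is `w`
(`icfl_basic`). From the increase, the word `x = r_{i-1} b_{i-1}` satisfies `m_h ≪ x` for every
`h < i`. It therefore suffices to show that, for any nonempty word `x` and any initial segment
`N` of `ICFL(w)` all of whose members are `≪ x`, `x` is not a factor of the product of `N`
(`icfl_no_factor`).

This is proved by induction along the recursive definition of `ICFL(w)`, with `w = p v`,
`p = r a s`, `p̄ = r b`. An inverse Lyndon word `m ≪ x` has no factor `x`, because the suffix of
`m` starting at such a factor would exceed `m`. The induction hypothesis excludes an occurrence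
of `x` inside the part of the product contributed by `v`. What remains is an occurrence
straddling the end of `p`. Since `p r` is still an inverse Lyndon word, such an occurrence forces
`r a` to be a prefix of `x` (`cross`). If `p̄` is a prefix of `m'₁`, then `m'₁` starts with `r b`,
so `x ≪ m'₁`, against `m'₁ ≪ x`. If `m'₁` is a prefix of `r`, it is a prefix of `x`, which again
contradicts `m'₁ ≪ x`.
-/

open List

section Defs

variable {α : Type*} [LinearOrder α]

/-- The lexicographic order `x ≺ y` on words over the ordered alphabet `α`. -/
def lexLt (x y : List α) : Prop := List.Lex (· < ·) x y

/-- The inverse `<_in` of the letter order. -/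
def invLt (a b : α) : Prop := b < a

/-- `x ≪ y` : `x ≺ y` and `x` is not a (proper) prefix of `y`. -/
def lexLtLt (x y : List α) : Prop := lexLt x y ∧ ¬ x <+: y

/-- `w` is a Lyndon word with respect to the letter order `r`:
nonempty, primitive, and `≺ᵣ`-smaller than each of its proper nonempty suffixes. -/
def IsLyndonWith (r : α → α → Prop) (w : List α) : Prop :=
  w ≠ [] ∧ (∀ (u : List α) (n : ℕ), w = (List.replicate n u).flatten → n = 1) ∧
  ∀ s : List α, s ≠ [] → s ≠ w → s <:+ w → List.Lex r w s

/-- `L` is the Lyndon factorization of `w` with respect to the letter order `r`: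
a nonempty sequence of Lyndon words, nonincreasing for `≺ᵣ`, whose product is `w`. -/
def IsCFLWith (r : α → α → Prop) (w : List α) (L : List (List α)) : Prop :=
  L ≠ [] ∧ L.flatten = w ∧ (∀ l ∈ L, IsLyndonWith r l) ∧
  List.Chain' (fun x y => ¬ List.Lex r x y) L

/-- an anti-prenecklace: a prefix of a power of an anti-Lyndon word. -/
def IsAntiPrenecklace (z : List α) : Prop :=
  ∃ (l : List α) (k : ℕ), IsLyndonWith invLt l ∧ z <+: (List.replicate k l).flatten

/-- an inverse Lyndon word: each proper nonempty suffix is `≺`-smaller than `w`. -/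
def IsInvLyndon (w : List α) : Prop :=
  w ≠ [] ∧ ∀ s : List α, s ≠ [] → s ≠ w → s <:+ w → lexLt s w

/-- `z` is a border of `w`: a proper prefix and a suffix of `w`. -/
def IsBorder (z w : List α) : Prop := z <+: w ∧ z ≠ w ∧ z <:+ w

/-- `(p, pbar) ∈ Pref_bre(w)`: `p` is an inverse Lyndon word which is a nonempty proper
prefix of `w = p v` and `pbar` is its bounded right extension. -/
def IsBRE (p pbar w : List α) : Prop :=
  IsInvLyndon p ∧ p ≠ [] ∧ p ≠ w ∧
  (∃ v : List α, w = p ++ v ∧ pbar <+: v) ∧ pbar ≠ [] ∧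
  IsInvLyndon pbar ∧
  (∀ z' : List α, z' ≠ [] → z' ≠ pbar → z' <+: pbar → IsInvLyndon (p ++ z')) ∧
  ¬ IsInvLyndon (p ++ pbar) ∧
  lexLt p pbar ∧ ¬ p <+: pbar

/-- The canonical inverse Lyndon factorization `ICFL(w) = M`. -/
inductive IsICFL : List α → List (List α) → Prop
  | base (w : List α) : IsInvLyndon w → IsICFL w [w]
  | ext (w p pbar v m1 : List α) (ms : List (List α)) :
      ¬ IsInvLyndon w → IsBRE p pbar w → w = p ++ v →
      IsICFL v (m1 :: ms) → pbar <+: m1 → IsICFL w (p :: m1 :: ms)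
  | grp (w p pbar v r : List α) (a b : α) (s m1 : List α) (ms : List (List α)) :
      ¬ IsInvLyndon w → IsBRE p pbar w → w = p ++ v →
      p = r ++ a :: s → pbar = r ++ [b] → a < b →
      IsICFL v (m1 :: ms) → m1 <+: r → IsICFL w ((p ++ m1) :: ms)

/-- the longest common prefix of two words. -/
def lcp : List α → List α → List α
  | a :: x, b :: y => if a = b then a :: lcp x y else []
  | _, _ => []

end Defs

lemma infix_append_cases {α : Type*} {x p v : List α} (h : x <:+: p ++ v) :
    x <:+: p ∨ x <:+: v ∨ ∃ q y, x = q ++ y ∧ q ≠ [] ∧ q <:+ p ∧ y <+: v := by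
  obtain ⟨u, t, e⟩ := h
  rw [List.append_assoc] at e
  rcases List.append_eq_append_iff.1 e with ⟨c, rfl, hc⟩ | ⟨c, rfl, hc⟩
  · rcases List.append_eq_append_iff.1 hc with ⟨d, rfl, hd⟩ | ⟨d, rfl, hd⟩
    · exact Or.inl ⟨u, d, by simp⟩
    · by_cases hce : c = []
      · exact Or.inr (Or.inl (by subst hce; exact ⟨[], t, by simp [hd]⟩))
      · exact Or.inr (Or.inr ⟨c, d, rfl, hce, ⟨u, rfl⟩, ⟨t, hd.symm⟩⟩)
  · exact Or.inr (Or.inl ⟨c, t, by simp [hc]⟩)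

section Aux

variable {α : Type*} [LinearOrder α]

/-- `x ≪ y` in explicit form: the two words differ at some position, and `x` has the smaller
letter at the first such position. -/
def LL (x y : List α) : Prop :=
  ∃ (r : List α) (a b : α) (s t : List α), x = r ++ a :: s ∧ y = r ++ b :: t ∧ a < b

lemma LL.mono {x y x' y' : List α} (h : LL x y) (hx : x <+: x') (hy : y <+: y') : LL x' y' := by
  obtain ⟨r, a, b, s, t, rfl, rfl, hab⟩ := h
  obtain ⟨u, rfl⟩ := hx
  obtain ⟨v, rfl⟩ := hy
  exact ⟨r, a, b, s ++ u, t ++ v, by simp, by simp, hab⟩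

lemma LL.cons {x y : List α} (c : α) (h : LL x y) : LL (c :: x) (c :: y) := by
  obtain ⟨r, a, b, s, t, rfl, rfl, hab⟩ := h
  exact ⟨c :: r, a, b, s, t, by simp, by simp, hab⟩

lemma LL.lt {x y : List α} (h : LL x y) : x < y := by
  obtain ⟨r, a, b, s, t, rfl, rfl, hab⟩ := h
  induction r with
  | nil => exact List.Lex.rel hab
  | cons c r ih => exact List.Lex.cons ih

lemma LL.irrefl {x : List α} (h : LL x x) : False := lt_irrefl _ h.lt

lemma prefix_or_LL_of_lt {x y : List α} (h : List.Lex (· < ·) x y) : x <+: y ∨ LL x y := by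
  induction h with
  | nil => exact Or.inl (List.nil_prefix)
  | @rel a s b t hab => exact Or.inr ⟨[], a, b, s, t, rfl, rfl, hab⟩
  | @cons a s t _ ih =>
    rcases ih with ih | ih
    · exact Or.inl ((List.prefix_cons_inj a).2 ih)
    · exact Or.inr (ih.cons a)

lemma LL.trans {x y z : List α} (h : LL x y) (h' : LL y z) : LL x z := by
  rcases prefix_or_LL_of_lt (h.lt.trans h'.lt) with hp | hl
  · exact ((lt_asymm h'.lt) (h.mono hp List.prefix_rfl).lt).elim
  · exact hl

lemma invLyndon_suffix_le {m s : List α} (hm : IsInvLyndon m) (hs : s ≠ []) (h : s <:+ m) :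
    s ≤ m := by
  by_cases e : s = m
  · exact e.le
  · exact le_of_lt (hm.2 s hs e h)

lemma invLyndon_not_infix {m x : List α} (hm : IsInvLyndon m) (h : LL m x) : ¬ x <:+: m := by
  rintro ⟨u, t, e⟩
  have hlt := (h.mono List.prefix_rfl (List.prefix_append x t)).lt
  have hne : x ++ t ≠ [] := by
    rintro e'
    rw [e'] at hlt
    exact absurd hlt (List.not_lt_nil _)
  exact absurd (invLyndon_suffix_le hm hne ⟨u, by simpa using e⟩) (not_le.2 hlt)

/-- The bounded right extension ends at the first letter where it exceeds `p`, because every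
shorter extension of `p` is still an inverse Lyndon word. -/
lemma bre_shape {p pbar w : List α} (h : IsBRE p pbar w) :
    ∃ (r : List α) (a b : α) (s : List α), p = r ++ a :: s ∧ pbar = r ++ [b] ∧ a < b := by
  obtain ⟨-, -, -, -, -, -, hz, -, hlt, hnp⟩ := h
  rcases prefix_or_LL_of_lt hlt with hp | ⟨r, a, b, s, t, rfl, rfl, hab⟩
  · exact absurd hp hnp
  refine ⟨r, a, b, s, rfl, ?_, hab⟩
  by_contra hne
  have hI := hz (r ++ [b]) (by simp) (fun e => hne e.symm) ⟨t, by simp⟩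
  have hle := invLyndon_suffix_le hI (s := r ++ [b]) (by simp) (List.suffix_append _ _)
  have hLL : LL (r ++ a :: s ++ (r ++ [b])) (r ++ [b]) :=
    ⟨r, a, b, s ++ (r ++ [b]), [], by simp, rfl, hab⟩
  exact absurd hle (not_le.2 hLL.lt)

/-- For every proper prefix `z` of the bounded right extension `r b`, including the empty one,
`p z` is an inverse Lyndon word. -/
lemma bre_append {p w r z : List α} {b : α} (h : IsBRE p (r ++ [b]) w) (hz : z <+: r) :
    IsInvLyndon (p ++ z) := by
  by_cases e : z = []
  · simpa [e] using h.1
  · refine h.2.2.2.2.2.2.1 z e ?_ (hz.trans (List.prefix_append _ _))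
    rintro rfl
    simpa using hz.length_le

lemma bre_prefix {p pbar w v : List α} (h : IsBRE p pbar w) (hw : w = p ++ v) : pbar <+: v := by
  obtain ⟨v', hv', hp⟩ := h.2.2.2.1
  rw [hw] at hv'
  rwa [List.append_cancel_left hv']

/-- An occurrence `x = q y` straddling the end of `p`, with `q` a suffix of `p` and `y` a prefix
of what follows, forces `r a` to be a prefix of `x`. If `y` were a prefix of `r`, then `x` would
be a factor of the inverse Lyndon word `p r ≪ x`. So `q r` is a prefix of `x`, and the suffix
`q r` of `p r` must also be a prefix of `p r`, since otherwise `x ≪ p r`. -/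
lemma cross {p r s x q y v : List α} {a : α} (hp : p = r ++ a :: s)
    (hP : IsInvLyndon (p ++ r)) (hx : LL (p ++ r) x) (hxq : x = q ++ y) (hq : q ≠ [])
    (hqp : q <:+ p) (hy : y <+: v) (hr : r <+: v) : r ++ [a] <+: x := by
  have hle : q ++ r ≤ p ++ r := invLyndon_suffix_le hP (by simp [hq])
    (by obtain ⟨u, rfl⟩ := hqp; exact ⟨u, by simp⟩)
  rcases List.prefix_or_prefix_of_prefix hy hr with h | h
  · have h1 : x <+: q ++ r := by
      rw [hxq]; exact (List.prefix_append_right_inj q).2 h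
    exact absurd hle (not_le.2 (hx.mono List.prefix_rfl h1).lt)
  · have h1 : q ++ r <+: x := by
      rw [hxq]; exact (List.prefix_append_right_inj q).2 h
    have h2 : q ++ r <+: p ++ r := by
      rcases hle.eq_or_lt with e | hlt
      · rw [e]
      · rcases prefix_or_LL_of_lt hlt with h' | h'
        · exact h'
        · exact (lt_asymm hx.lt (h'.mono h1 List.prefix_rfl).lt).elim
    have h3 : r ++ [a] <+: p ++ r := ⟨s ++ r, by simp [hp]⟩
    refine (List.prefix_of_prefix_length_le h3 h2 ?_).trans h1
    have := List.length_pos_iff.2 hq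
    simp only [List.length_append, List.length_singleton]
    omega

lemma icfl_basic {w : List α} {M : List (List α)} (h : IsICFL w M) :
    M.flatten = w ∧ (∀ m ∈ M, IsInvLyndon m) ∧ M.Pairwise LL := by
  induction h with
  | base w h => simpa using h
  | ext w p pbar v m1 ms hn hb hw hM hpre ih =>
    obtain ⟨hf, hI, hP⟩ := ih
    refine ⟨by rw [hw, ← hf]; simp, ?_, ?_⟩
    · intro m hm
      rcases List.mem_cons.1 hm with rfl | hm
      · exact hb.1
      · exact hI m hm
    · obtain ⟨r, a, b, s, hp, hpb, hab⟩ := bre_shape hb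
      have h1 : LL p m1 :=
        LL.mono ⟨r, a, b, s, [], hp, hpb, hab⟩ List.prefix_rfl hpre
      refine List.pairwise_cons.2 ⟨?_, hP⟩
      intro m hm
      rcases List.mem_cons.1 hm with rfl | hm
      · exact h1
      · exact h1.trans ((List.pairwise_cons.1 hP).1 m hm)
  | grp w p pbar v r a b s m1 ms hn hb hw hp hpb hab hM hpre ih =>
    obtain ⟨hf, hI, hP⟩ := ih
    refine ⟨by rw [hw, ← hf]; simp, ?_, ?_⟩
    · intro m hm
      rcases List.mem_cons.1 hm with rfl | hm
      · subst hpb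
        exact bre_append hb hpre
      · exact hI m (List.mem_cons_of_mem _ hm)
    · obtain ⟨h1, h2⟩ := List.pairwise_cons.1 hP
      refine List.pairwise_cons.2 ⟨?_, h2⟩
      intro m hm
      -- `m1` is a prefix of `r`, hence of `p`, so `m1 ≪ m` already decides the comparison.
      refine (h1 m hm).mono (hpre.trans ?_) List.prefix_rfl
      exact ⟨a :: s ++ m1, by simp [hp]⟩

/-- Only the position of `x` above the factors matters here: `x` need not be related to any
later factor of the factorization. -/
lemma icfl_no_factor {w : List α} {M : List (List α)} (h : IsICFL w M) (x : List α)
    (hx : x ≠ []) : ∀ N : List (List α), N <+: M → (∀ m ∈ N, LL m x) → ¬ x <:+: N.flatten := by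
  induction h with
  | base w h =>
    intro N hN hL
    rcases N with _ | ⟨m, N⟩
    · simpa using hx
    · rw [List.cons_prefix_cons] at hN
      obtain ⟨rfl, hN⟩ := hN
      obtain rfl := List.prefix_nil.1 hN
      simpa using invLyndon_not_infix h (hL m (by simp))
  | ext w p pbar v m1 ms hn hb hw hM hpre ih =>
    intro N hN hL
    rcases N with _ | ⟨m, N⟩
    · simpa using hx
    rw [List.cons_prefix_cons] at hN
    obtain ⟨rfl, hN⟩ := hN
    have hpx := hL m (by simp)
    rcases N with _ | ⟨m', N⟩
    · simpa using invLyndon_not_infix hb.1 hpx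
    have ih' := ih _ hN (fun y hy => hL y (List.mem_cons_of_mem _ hy))
    rw [List.cons_prefix_cons] at hN
    obtain ⟨rfl, hN⟩ := hN
    have hmx := hL m' (by simp)
    obtain ⟨r, a, b, s, hp, rfl, hab⟩ := bre_shape hb
    intro hinf
    rw [List.flatten_cons] at hinf
    rcases infix_append_cases hinf with h | h | ⟨q, y, hxq, hq, hqp, hy⟩
    · exact invLyndon_not_infix hb.1 hpx h
    · exact ih' h
    · have hr : r <+: (m' :: N).flatten := by
        rw [List.flatten_cons]
        exact ((List.prefix_append r [b]).trans hpre).trans (List.prefix_append _ _)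
      have hc := cross hp (bre_append hb List.prefix_rfl)
        (hpx.mono (List.prefix_append _ _) List.prefix_rfl) hxq hq hqp hy hr
      have : LL x m' := LL.mono ⟨r, a, b, [], [], rfl, rfl, hab⟩ hc hpre
      exact lt_asymm hmx.lt this.lt
  | grp w p pbar v r a b s m1 ms hn hb hw hp hpb hab hM hpre ih =>
    intro N hN hL
    subst hpb
    rcases N with _ | ⟨m, N⟩
    · simpa using hx
    rw [List.cons_prefix_cons] at hN
    obtain ⟨rfl, hN⟩ := hN
    have hpx := hL (p ++ m1) (by simp)
    rcases N with _ | ⟨m', N⟩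
    · simpa using invLyndon_not_infix (bre_append hb hpre) hpx
    obtain ⟨hf, hI, hP⟩ := icfl_basic hM
    -- `m1` lies below the factor following it, which lies below `x`.
    have hmx : LL m1 x :=
      ((List.pairwise_cons.1 hP).1 m' (hN.subset (by simp))).trans (hL m' (by simp))
    have hN' : m1 :: m' :: N <+: m1 :: ms := (List.prefix_cons_inj m1).2 hN
    have ih' := ih _ hN' (by
      intro y hy
      rcases List.mem_cons.1 hy with rfl | hy
      · exact hmx
      · exact hL y (List.mem_cons_of_mem _ hy))
    have hPr : IsInvLyndon (p ++ r) := bre_append hb List.prefix_rfl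
    have hPx : LL (p ++ r) x :=
      hpx.mono ((List.prefix_append_right_inj p).2 hpre) List.prefix_rfl
    intro hinf
    rw [List.flatten_cons, List.append_assoc, ← List.flatten_cons] at hinf
    rcases infix_append_cases hinf with h | h | ⟨q, y, hxq, hq, hqp, hy⟩
    · exact invLyndon_not_infix hPr hPx (h.trans (List.prefix_append _ _).isInfix)
    · exact ih' h
    · have hyv : y <+: v := by
        refine hy.trans ?_
        rw [← hf]
        obtain ⟨K, hK⟩ := hN'
        exact ⟨K.flatten, by rw [← hK, List.flatten_append]⟩
      have hrv : r <+: v := (List.prefix_append r [b]).trans (bre_prefix hb hw)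
      have hc := cross hp hPr hPx hxq hq hqp hyv hrv
      exact (hmx.mono (hpre.trans ((List.prefix_append r [a]).trans hc)) List.prefix_rfl).irrefl

end Aux

/-- Lemma `Lemma3`: with `ICFL(w) = (m₁, …, m_k)`, `m_h = r_h a_h s_h`,
`m_i = r_h b_h t_h`, `a_h < b_h` for each `h < i` (0-based), the word
`r_{i-1} b_{i-1}` is not a factor of `m₁ m₂ ⋯ m_{i-1} = (M.take i).flatten`. -/
theorem stmt14 {α : Type*} [LinearOrder α] (w : List α) (hw : w ≠ [])
    (hwn : ¬ IsInvLyndon w)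
    (M : List (List α)) (hM : IsICFL w M)
    (i : ℕ) (hi0 : 0 < i) (hik : i < M.length)
    (r s t : ℕ → List α) (a b : ℕ → α)
    (hdec : ∀ h, h < i →
      M[h]! = r h ++ a h :: s h ∧ M[i]! = r h ++ b h :: t h ∧ a h < b h) :
    ¬ (r (i-1) ++ [b (i-1)]) <:+: (M.take i).flatten := by
  obtain ⟨-, -, hP⟩ := icfl_basic hM
  obtain ⟨e1, e2, hab⟩ := hdec (i-1) (by omega)
  refine icfl_no_factor hM _ (by simp) _ (List.take_prefix i M) ?_
  have hlast : LL M[i-1]! (r (i-1) ++ [b (i-1)]) :=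
    ⟨r (i-1), a (i-1), b (i-1), s (i-1), [], e1, rfl, hab⟩
  intro m hm
  obtain ⟨h, hh, rfl⟩ := List.mem_take_iff_getElem.1 hm
  have hhi : h < i := by omega
  have hhM : h < M.length := by omega
  -- The last factor of the segment is `≪ x` by its decomposition; the others lie below it.
  rcases Nat.lt_or_ge h (i-1) with hlt | hge
  · have := List.pairwise_iff_getElem.1 hP h (i-1) hhM (by omega) hlt
    rw [getElem!_pos M (i-1) (by omega)] at hlast
    exact this.trans hlast
  · have e : h = i - 1 := by omega
    subst e
    rwa [getElem!_pos M (i-1) (by omega)] at hlast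
end

section
/- Let w be a nonempty word over a totally ordered alphabet Σ that is not an inverse Lyndon word, and let ICFL(w) = (m1, …, mk). Let i be an integer with 1 < i ≤ k and write m_{i−1} = r a s and m_i = r b t, where a, b are letters with a < b and r, s, t are words. If x and y are distinct nonempty suffixes of m_{i−1}, then lcp(x_w, y_w) = lcp(x r, y r). -/
/-!
Let `x` be the shorter of the two suffixes. Then `x_w` starts with `x r b` and `y_w` with `y r`,
and `|x r| < |y r|`, so the two longest common prefixes can differ only if `x r b` is a prefix of
`y r`. In that case `x` is a prefix of `y = x v`, where `v` is a nonempty suffix of `m_{i-1}`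
and `r b` is a prefix of `v r`. Consecutive factors never admit such a `v` (`GoodPair`), which is
shown by induction on the factorization (`isChain_goodPair`).

* If `m_{i-1} = p` and the bounded right extension is a prefix of `m_i`, then `p r` is an inverse
  Lyndon word beginning with `r a`, so `r b` cannot occur in its suffix `v r`.
* If `m_{i-1} = p m` is obtained by grouping, then `m` is a prefix of `p`, so `p m` and `m` begin
  with the same `r a`. A suffix `v` of `m` is excluded by induction. A longer `v` has
  more than `|r|` letters, so `r b` would be a prefix of a suffix of the inverse Lyndon word `p m`.

In the grouping case `p m r` itself need not be an inverse Lyndon word: for `w = 2102122` the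
factorization is `(21021, 22)` with `r = 2`, and `210212` is not one. This is why the
induction carries only the statement about suffixes of `m_{i-1}`.
-/

open List

section Aux

variable {α : Type*} [LinearOrder α]

/-- `p = r a s` and `q = r b t` with `a < b`, and no nonempty suffix `v` of `p` is such that
`r b` is a prefix of `v r`. -/
def GoodPair (p q : List α) : Prop :=
  ∃ (r s t : List α) (a b : α), p = r ++ a :: s ∧ q = r ++ b :: t ∧ a < b ∧
    ∀ v : List α, v ≠ [] → v <:+ p → ¬ (r ++ [b]) <+: (v ++ r)

lemma lexLt_asymm {x y : List α} (h : lexLt x y) : ¬ lexLt y x :=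
  fun h' => lt_asymm (show x < y from h) (show y < x from h')

lemma lexLt_of_fork (r s t : List α) {a b : α} (hab : a < b) :
    lexLt (r ++ a :: s) (r ++ b :: t) := by
  induction r with
  | nil => exact List.Lex.rel hab
  | cons c r ih => exact List.Lex.cons ih

lemma exists_fork {x y : List α} (h : lexLt x y) (hn : ¬ x <+: y) :
    ∃ (r s t : List α) (a b : α), x = r ++ a :: s ∧ y = r ++ b :: t ∧ a < b := by
  unfold lexLt at h
  induction h with
  | nil => exact absurd List.nil_prefix hn
  | @cons c x y _ ih =>
    obtain ⟨r, s, t, a, b, rfl, rfl, hab⟩ := ih (fun h => hn (by simpa using h))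
    exact ⟨c :: r, s, t, a, b, rfl, rfl, hab⟩
  | @rel a x b y hab => exact ⟨[], x, y, a, b, rfl, rfl, hab⟩

lemma fork_unique {α : Type*} {r s t r' s' t' : List α} {a b a' b' : α} (hab : a ≠ b) (hab' : a' ≠ b')
    (h1 : r ++ a :: s = r' ++ a' :: s') (h2 : r ++ b :: t = r' ++ b' :: t') :
    r = r' ∧ b = b' := by
  induction r generalizing r' with
  | nil => cases r' <;> simp_all
  | cons c r ih =>
    cases r' with
    | nil => simp_all
    | cons d r' =>
      simp only [List.cons_append, List.cons.injEq] at h1 h2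
      obtain ⟨h, h'⟩ := ih h1.2 h2.2
      exact ⟨by rw [h1.1, h], h'⟩

/-- A suffix of an inverse Lyndon word cannot begin with `r b` when the word begins with `r a`,
`a < b`: such a suffix would be larger than the word. -/
lemma IsInvLyndon.not_prefix_of_suffix {P z r s : List α} {a b : α} (hP : IsInvLyndon P)
    (hPr : P = r ++ a :: s) (hab : a < b) (hz : z <:+ P) : ¬ (r ++ [b]) <+: z := by
  rintro ⟨t, ht⟩
  have ht' : z = r ++ b :: t := by simp [← ht]
  have hlt : lexLt P z := by rw [hPr, ht']; exact lexLt_of_fork r s t hab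
  refine lexLt_asymm hlt (hP.2 z (by simp [ht']) ?_ hz)
  rintro rfl
  exact lexLt_asymm hlt hlt

lemma isChain_goodPair {w : List α} {M : List (List α)} (hM : IsICFL w M) :
    M.IsChain GoodPair := by
  induction hM with
  | base w _ => exact List.isChain_singleton _
  | ext w p pbar v m1 ms hw hbre hwv hv hpm ih =>
    refine List.isChain_cons_cons.2 ⟨?_, ih⟩
    obtain ⟨hp, -, -, -, -, -, hz, -, hlt, hnp⟩ := hbre
    obtain ⟨r, s, t, a, b, h1, h2, hab⟩ := exists_fork hlt hnp
    obtain ⟨t', rfl⟩ := hpm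
    refine ⟨r, s, t ++ t', a, b, h1, by simp [h2], hab, fun v hv hvs => ?_⟩
    have hpr : IsInvLyndon (p ++ r) := by
      by_cases hr : r = []
      · simpa [hr] using hp
      · exact hz r hr (by simp [h2]) ⟨_, h2.symm⟩
    refine hpr.not_prefix_of_suffix (s := s ++ r) (by simp [h1]) hab ?_
    obtain ⟨u, rfl⟩ := hvs
    exact ⟨u, by simp⟩
  | grp w p pbar v r a b s m1 ms hw hbre hwv hpr hpb hab hv hmr ih =>
    cases ms with
    | nil => exact List.isChain_singleton _
    | cons m2 ms =>
      obtain ⟨hg, hch⟩ := List.isChain_cons_cons.1 ih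
      refine List.isChain_cons_cons.2 ⟨?_, hch⟩
      obtain ⟨r', s', t', a', b', h1, h2, hab', hgv⟩ := hg
      obtain ⟨q, rfl⟩ := hmr
      obtain ⟨hp, -, -, -, -, -, hz, -⟩ := hbre
      have hpm : IsInvLyndon (p ++ m1) :=
        hz m1 (by simp [h1]) (by simp [hpb]) ⟨q ++ [b], by simp [hpb]⟩
      have hdec : p ++ m1 = r' ++ a' :: (s' ++ (q ++ a :: s) ++ m1) := by
        rw [hpr, h1]; simp
      refine ⟨r', _, t', a', b', hdec, h2, hab', fun v hv hvs hpre => ?_⟩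
      rcases le_total v.length m1.length with hle | hle
      · exact hgv v hv (List.suffix_of_suffix_length_le hvs (List.suffix_append _ _) hle) hpre
      · have hl : r'.length + 1 ≤ m1.length := by simp [h1]
        exact hpm.not_prefix_of_suffix hdec hab' hvs
          (List.prefix_of_prefix_length_le hpre (List.prefix_append _ _) (by simp; omega))

lemma lcp_comm (x y : List α) : lcp x y = lcp y x := by
  induction x generalizing y with
  | nil => cases y <;> simp [lcp]
  | cons a x ih =>
    cases y with
    | nil => simp [lcp]
    | cons b y =>
      by_cases h : a = b
      · subst h; simp [lcp, ih y]
      · simp [lcp, h, Ne.symm h]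

lemma lcp_append_of_not_prefix {X Y : List α} {b : α} (t t' : List α)
    (hl : X.length < Y.length) (hn : ¬ (X ++ [b]) <+: Y) :
    lcp (X ++ b :: t) (Y ++ t') = lcp X Y := by
  induction X generalizing Y with
  | nil =>
    cases Y with
    | nil => simp at hl
    | cons c Y =>
      have : b ≠ c := by rintro rfl; exact hn (by simp)
      simp [lcp, this]
  | cons d X ih =>
    cases Y with
    | nil => simp at hl
    | cons c Y =>
      by_cases h : d = c
      · subst h
        simp only [List.cons_append, lcp, if_true]
        rw [ih (by simpa using hl) (fun h => hn (by simpa using h))]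
      · simp [lcp, h]

/-- The asymmetric form of the theorem, with `x` the shorter suffix. -/
lemma lcp_suffixes {p r t x y : List α} {b : α}
    (hg : ∀ v : List α, v ≠ [] → v <:+ p → ¬ (r ++ [b]) <+: (v ++ r))
    (hys : y <:+ p) (hl : x.length < y.length) :
    lcp (x ++ (r ++ b :: t)) (y ++ (r ++ b :: t)) = lcp (x ++ r) (y ++ r) := by
  have key : ¬ ((x ++ r) ++ [b]) <+: (y ++ r) := by
    intro h
    have hxy : x <+: y := List.prefix_of_prefix_length_le
      (((List.prefix_append x (r ++ [b])).trans (by simpa using h)))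
      (List.prefix_append _ _) hl.le
    obtain ⟨v, rfl⟩ := hxy
    refine hg v (by rintro rfl; simp at hl) ((List.suffix_append x v).trans hys) ?_
    rw [List.append_assoc, List.append_assoc] at h
    exact (List.prefix_append_right_inj x).1 h
  have := lcp_append_of_not_prefix t (b :: t) (by simpa using hl) key
  simpa using this

end Aux

theorem stmt15 {α : Type*} [LinearOrder α] (w : List α) (hw : w ≠ [])
    (hwn : ¬ IsInvLyndon w)
    (M : List (List α)) (hM : IsICFL w M)
    (i : ℕ) (hi0 : 0 < i) (hik : i < M.length)
    (r s t : List α) (a b : α)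
    (hm1 : M[i-1]! = r ++ a :: s) (hm2 : M[i]! = r ++ b :: t) (hab : a < b)
    (x y : List α) (hx : x ≠ []) (hy : y ≠ []) (hxy : x ≠ y)
    (hxs : x <:+ M[i-1]!) (hys : y <:+ M[i-1]!) :
    lcp (x ++ (M.drop i).flatten) (y ++ (M.drop i).flatten) = lcp (x ++ r) (y ++ r) := by
  obtain ⟨j, rfl⟩ : ∃ j, i = j + 1 := ⟨i - 1, by omega⟩
  simp only [Nat.add_sub_cancel] at hm1 hxs hys
  have hg := List.isChain_iff_getElem.1 (isChain_goodPair hM) j hik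
  rw [getElem!_pos M j (by omega)] at hm1 hxs hys
  rw [getElem!_pos M (j + 1) hik] at hm2
  obtain ⟨r', s', t', a', b', h1, h2, hab', hgv⟩ := hg
  obtain ⟨rfl, rfl⟩ := fork_unique hab.ne hab'.ne (hm1.symm.trans h1) (hm2.symm.trans h2)
  rw [List.drop_eq_getElem_cons hik, List.flatten_cons, hm2, List.append_assoc, List.cons_append]
  rcases lt_trichotomy x.length y.length with hl | hl | hl
  · exact lcp_suffixes hgv hys hl
  · exact absurd ((List.suffix_of_suffix_length_le hxs hys hl.le).eq_of_length hl) hxy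
  · rw [lcp_comm, lcp_comm (x ++ r)]
    exact lcp_suffixes hgv hxs hl
end

section
/- Let w be a nonempty word over a totally ordered alphabet Σ that is not an inverse Lyndon word, and let ICFL(w) = (m1, …, mk). Let i, j be integers with 1 < i < j ≤ k, let x be a nonempty suffix of m_{i−1} and y a nonempty suffix of m_{j−1}. Then lcp(x_w, y_w) is a prefix of y m_j. -/
/-!
The key fact is a strengthening of `m₁ ≪ m₂ ≪ ⋯ ≪ m_k`: *every nonempty suffix* `u` of a factor
satisfies `u ≪ m` for every later factor `m` (`IsICFL.pairwise`). It is proved by induction on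
the construction of the factorization. The step rests on `IsBRE.suffix_strictLt`: all
nonempty suffixes of `p` are `≪ p̄`. Only a border `u` of `p` could fail this, by being a prefix of
`r`, where `p = r a s` and `p̄ = r b t`. Writing `r = u r₁`, comparing the suffix `u r` of the
inverse Lyndon word `p r` with `p r` gives `r ≺ r₁ a ⋯`, while comparing the suffix `r₁ b t` of `p̄`
with `p̄` gives `r₁ b ⋯ ≺ r ⋯`; since `r₁` is shorter than `r` and `a < b`, this is absurd.
When `p` is merged with the next factor `m`, a prefix of `r`, a suffix `u' m` with `u'` a nonempty suffix of `p` satisfies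
`u' ≪ p̄`; hence `u' ≪ m` or `u'` begins with `m`, and `u' m` inherits `m ≪ m'` for later `m'`.

If `lcp(x_w, y_w)` were not a prefix of `y m_j`, then `y m_j` would be a prefix of
`x_w = x m_i ⋯ m_k`. As `y` is too short to cover `x m_i ⋯ m_{j-1}`, the occurrence of `m_j` starts
inside `x` or one of `m_i, …, m_{j-1}`, so `m_j` is prefix-comparable with a nonempty suffix of
an earlier factor, contradicting `≪` (`not_prefix_of_suffixesLt`).
-/

open List

/-! ### The relation `≪` and the lexicographic order -/

section Aux

theorem suffix_append_cases {β : Type*} {u x y : List β} (h : u <:+ x ++ y) :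
    u <:+ y ∨ ∃ u', u = u' ++ y ∧ u' <:+ x := by
  obtain ⟨t, ht⟩ := h
  rcases List.append_eq_append_iff.1 ht with ⟨c, rfl, rfl⟩ | ⟨c, rfl, rfl⟩
  · exact .inr ⟨c, rfl, List.suffix_append _ _⟩
  · exact .inl (List.suffix_append _ _)

variable {α : Type*} [LinearOrder α]

/-- The relation `x ≪ y` in recursive form: the words differ at some position present in both, and
at the first such position the letter of `x` is smaller. -/
def StrictLt : List α → List α → Prop
  | a :: x, b :: y => a < b ∨ (a = b ∧ StrictLt x y)
  | _, _ => False

theorem StrictLt.append {u v : List α} (h : StrictLt u v) (x y : List α) :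
    StrictLt (u ++ x) (v ++ y) := by
  induction u generalizing v with
  | nil => simp [StrictLt] at h
  | cons a u ih =>
    cases v with
    | nil => simp [StrictLt] at h
    | cons b v =>
      simp only [StrictLt, List.cons_append] at h ⊢
      exact h.imp id (fun h => ⟨h.1, ih h.2⟩)

theorem StrictLt.of_prefix {u v u' v' : List α} (h : StrictLt u v) (hu : u <+: u')
    (hv : v <+: v') : StrictLt u' v' := by
  obtain ⟨x, rfl⟩ := hu
  obtain ⟨y, rfl⟩ := hv
  exact h.append x y

theorem StrictLt.trans {u v w : List α} (h : StrictLt u v) (h' : StrictLt v w) :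
    StrictLt u w := by
  induction u generalizing v w with
  | nil => simp [StrictLt] at h
  | cons a u ih =>
    cases v with
    | nil => simp [StrictLt] at h
    | cons b v =>
      cases w with
      | nil => simp [StrictLt] at h'
      | cons c w =>
        simp only [StrictLt] at h h' ⊢
        rcases h with h | ⟨rfl, h⟩ <;> rcases h' with h' | ⟨rfl, h'⟩
        · exact .inl (h.trans h')
        · exact .inl h
        · exact .inl h'
        · exact .inr ⟨rfl, ih h h'⟩

theorem StrictLt.irrefl (u : List α) : ¬ StrictLt u u := by
  induction u with
  | nil => simp [StrictLt]
  | cons a u ih => simp [StrictLt, ih]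

theorem StrictLt.exists_eq {u v : List α} (h : StrictLt u v) :
    ∃ (r : List α) (a b : α) (s t : List α), u = r ++ a :: s ∧ v = r ++ b :: t ∧ a < b := by
  induction u generalizing v with
  | nil => simp [StrictLt] at h
  | cons a u ih =>
    cases v with
    | nil => simp [StrictLt] at h
    | cons b v =>
      rcases h with h | ⟨rfl, h⟩
      · exact ⟨[], a, b, u, v, rfl, rfl, h⟩
      · obtain ⟨r, c, d, s, t, rfl, rfl, hcd⟩ := ih h
        exact ⟨a :: r, c, d, s, t, rfl, rfl, hcd⟩

theorem strictLt_of_lt (r s t : List α) {a b : α} (h : a < b) :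
    StrictLt (r ++ a :: s) (r ++ b :: t) := by
  induction r with
  | nil => exact .inl h
  | cons c r ih => exact .inr ⟨rfl, ih⟩

theorem lexLt_cons {a b : α} {x y : List α} :
    lexLt (a :: x) (b :: y) ↔ a < b ∨ (a = b ∧ lexLt x y) := by
  unfold lexLt
  constructor
  · intro h
    cases h with
    | cons h => exact .inr ⟨rfl, h⟩
    | rel h => exact .inl h
  · rintro (h | ⟨rfl, h⟩)
    · exact .rel h
    · exact .cons h

theorem lexLt_append_left {x y : List α} (u : List α) (h : lexLt (u ++ x) (u ++ y)) :
    lexLt x y := by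
  induction u with
  | nil => exact h
  | cons a u ih =>
    rcases lexLt_cons.1 h with h | h
    · exact absurd h (lt_irrefl a)
    · exact ih h.2

theorem prefix_or_strictLt_of_lexLt {u v : List α} (h : lexLt u v) : u <+: v ∨ StrictLt u v := by
  induction u generalizing v with
  | nil => exact .inl (List.nil_prefix)
  | cons a u ih =>
    cases v with
    | nil => cases h
    | cons b v =>
      rcases lexLt_cons.1 h with hab | ⟨rfl, huv⟩
      · exact .inr (.inl hab)
      · rcases ih huv with h | h
        · exact .inl (List.cons_prefix_cons.2 ⟨rfl, h⟩)
        · exact .inr (.inr ⟨rfl, h⟩)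

/-- If `r` is longer than `r₁` and `a < b`, then `r ≺ r₁ a ⋯` and `r₁ b ⋯ ≺ r ⋯` exclude
each other. -/
theorem false_of_lexLt_of_lexLt {r₁ r s t t' : List α} {a b : α} (hlen : r₁.length < r.length)
    (hab : a < b) (h₁ : lexLt r (r₁ ++ a :: s)) (h₂ : lexLt (r₁ ++ b :: t) (r ++ t')) : False := by
  induction r₁ generalizing r with
  | nil =>
    cases r with
    | nil => simp at hlen
    | cons c r =>
      rcases lexLt_cons.1 h₁ with h₁ | ⟨h₁, -⟩ <;> rcases lexLt_cons.1 h₂ with h₂ | ⟨h₂, -⟩ <;> order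
  | cons d r₁ ih =>
    cases r with
    | nil => simp at hlen
    | cons c r =>
      rcases lexLt_cons.1 h₁ with h₁ | ⟨e₁, h₁⟩ <;> rcases lexLt_cons.1 h₂ with h₂ | ⟨e₂, h₂⟩
      · order
      · order
      · order
      · exact ih (by simpa using hlen) h₁ h₂

/-! ### Suffixes of the factors -/

/-- Every nonempty suffix of `p`, not only `p` itself, is `≪` its bounded right extension. -/
theorem IsBRE.suffix_strictLt {p q w : List α} (h : IsBRE p q w) {u : List α} (hu : u ≠ [])
    (hup : u <:+ p) : StrictLt u q := by
  obtain ⟨hp, -, -, -, -, hq, hmin, -, hlt, hnp⟩ := h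
  have hpq : StrictLt p q := (prefix_or_strictLt_of_lexLt hlt).resolve_left hnp
  by_cases hne : u = p
  · exact hne ▸ hpq
  rcases prefix_or_strictLt_of_lexLt (hp.2 u hu hne hup) with hpre | hs
  swap
  · exact hs.trans hpq
  obtain ⟨r, a, b, s, t, rfl, rfl, hab⟩ := hpq.exists_eq
  rcases List.prefix_or_prefix_of_prefix hpre (⟨s, by simp⟩ : r ++ [a] <+: r ++ a :: s)
    with hur | hur
  swap
  · exact (strictLt_of_lt r [] [] hab).of_prefix hur ⟨t, by simp⟩
  rcases List.prefix_concat_iff.1 hur with rfl | ⟨r₁, rfl⟩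
  · exact (strictLt_of_lt r [] [] hab).of_prefix (List.prefix_refl _) ⟨t, by simp⟩
  exfalso
  have hpos : 0 < u.length := List.length_pos_iff.2 hu
  -- `p r` is inverse Lyndon because `r` is a proper prefix of `p̄`; compare it with its suffix `u r`.
  have h₁ := (hmin (u ++ r₁) (by simp [hu]) (fun e => by simpa using congrArg List.length e)
    (List.prefix_append _ _)).2 (u ++ (u ++ r₁)) (by simp [hu])
    (fun e => hne (List.append_cancel_right e)) (by
      obtain ⟨g, hg⟩ := hup
      exact ⟨g, by rw [← hg]; simp⟩)
  have h₂ := hq.2 (r₁ ++ b :: t) (by simp)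
    (fun e => by
      have := congrArg List.length e
      simp only [List.length_append] at this
      omega) ⟨u, by simp⟩
  refine false_of_lexLt_of_lexLt (r₁ := r₁) (r := u ++ r₁) (s := s ++ (u ++ r₁)) (t := t)
    (t' := b :: t) (by simp; omega) hab (lexLt_append_left u ?_) h₂
  simpa using h₁

/-- `B` is nonempty and `≫` every nonempty suffix of `A`. Nonemptiness of `B` makes the relation
transitive. -/
def SuffixesLt (A B : List α) : Prop := B ≠ [] ∧ ∀ u, u ≠ [] → u <:+ A → StrictLt u B

theorem SuffixesLt.trans {A B C : List α} (h : SuffixesLt A B) (h' : SuffixesLt B C) :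
    SuffixesLt A C :=
  ⟨h'.1, fun u hu hA => (h.2 u hu hA).trans (h'.2 B h.1 (List.suffix_refl B))⟩

theorem IsICFL.nil_notMem {w : List α} {M : List (List α)} (h : IsICFL w M) : [] ∉ M := by
  induction h with
  | base w h => simpa using h.1.symm
  | ext w p q v m ms _ hbre _ _ _ ih =>
    simp only [List.mem_cons, not_or] at ih ⊢
    exact ⟨hbre.2.1.symm, ih⟩
  | grp w p q v r a b s m ms _ hbre _ _ _ _ _ _ ih =>
    simp only [List.mem_cons, not_or] at ih ⊢
    exact ⟨by simp [hbre.2.1], ih.2⟩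

/-- If `u ≪ v y`, the first difference lies either inside `v` or beyond it. -/
theorem StrictLt.append_cases {u v y : List α} (h : StrictLt u (v ++ y)) :
    StrictLt u v ∨ v <+: u := by
  induction v generalizing u with
  | nil => exact .inr List.nil_prefix
  | cons b v ih =>
    cases u with
    | nil => simp [StrictLt] at h
    | cons a u =>
      rcases h with h | ⟨rfl, h⟩
      · exact .inl (.inl h)
      · rcases ih h with h | h
        · exact .inl (.inr ⟨rfl, h⟩)
        · exact .inr (List.cons_prefix_cons.2 ⟨rfl, h⟩)

theorem SuffixesLt.not_prefix {A B u z : List α} (h : SuffixesLt A B) (hu : u ≠ [])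
    (hA : u <:+ A) : ¬ B <+: u ++ z := fun hB =>
  StrictLt.irrefl _ ((h.2 u hu hA).of_prefix (List.prefix_append u z) hB)

/-- In an ICFL, every nonempty suffix of a factor is `≪` each later factor. -/
theorem IsICFL.pairwise {w : List α} {M : List (List α)} (h : IsICFL w M) :
    M.Pairwise SuffixesLt := by
  induction h with
  | base w => simp
  | ext w p q v m ms _ hbre _ _ hqm ih =>
    have hpm : SuffixesLt p m := by
      refine ⟨fun e => ?_, fun u hu hup =>
        (hbre.suffix_strictLt hu hup).of_prefix (List.prefix_refl u) hqm⟩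
      subst e
      exact hbre.2.2.2.2.1 (List.prefix_nil.1 hqm)
    refine List.pairwise_cons.2 ⟨fun B hB => ?_, ih⟩
    rcases List.mem_cons.1 hB with rfl | hB
    · exact hpm
    · exact hpm.trans ((List.pairwise_cons.1 ih).1 B hB)
  | grp w p q v r a b s m ms _ hbre hv hp hq hab hicfl hmr ih =>
    obtain ⟨h₁, h₂⟩ := List.pairwise_cons.1 ih
    refine List.pairwise_cons.2 ⟨fun B hB => ⟨(h₁ B hB).1, fun u hu hup => ?_⟩, h₂⟩
    rcases suffix_append_cases hup with hum | ⟨u', rfl, hu'⟩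
    · exact (h₁ B hB).2 u hu hum
    by_cases hne : u' = []
    · subst hne
      exact (h₁ B hB).2 _ hu (by simp)
    have hm : m ≠ [] := fun e => hicfl.nil_notMem (by simp [e])
    have hmB : StrictLt m B := (h₁ B hB).2 m hm (List.suffix_refl m)
    obtain ⟨r₂, rfl⟩ := hmr
    -- `u' ≪ p̄` and `m` is a prefix of `p̄`, so either `u' ≪ m` or `u'` begins with `m`.
    have huq : StrictLt u' (m ++ (r₂ ++ [b])) := by
      simpa [hq] using hbre.suffix_strictLt hne hu'
    rcases huq.append_cases with hum | hmu
    · exact (hum.trans hmB).of_prefix (List.prefix_append _ _) (List.prefix_refl B)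
    · exact hmB.of_prefix (hmu.trans (List.prefix_append _ _)) (List.prefix_refl B)

/-! ### Locating `y m_j` in `x_w` -/

/-- If `B` is `≫` all nonempty suffixes of `x` and of the words in `A`, and `y` does not cover
`x A`, then `y B` is not a prefix of a word that begins with `x A`. -/
theorem not_prefix_of_suffixesLt {A : List (List α)} {x y B z : List α}
    (hlen : y.length < x.length + A.flatten.length) (hx : SuffixesLt x B)
    (hA : ∀ a ∈ A, SuffixesLt a B) : ¬ (y ++ B) <+: (x ++ (A.flatten ++ z)) := by
  induction A generalizing x y with
  | nil =>
    rintro ⟨t, ht⟩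
    simp only [List.flatten_nil, List.length_nil, Nat.add_zero] at hlen
    rw [List.append_assoc] at ht
    rcases List.append_eq_append_iff.1 ht with ⟨c, rfl, hc⟩ | ⟨c, rfl, -⟩
    · refine hx.not_prefix (u := c) (fun e => by simp [e] at hlen) (List.suffix_append y c) ⟨t, hc⟩
    · simp at hlen
  | cons a A ih =>
    rintro ⟨t, ht⟩
    rw [List.append_assoc] at ht
    have key : ∀ c, y = x ++ c → c ++ (B ++ t) = a ++ (A.flatten ++ z) → False := by
      rintro c rfl hc
      refine ih (x := a) (y := c) ?_ (hA a (by simp)) (fun a' h => hA a' (by simp [h])) ⟨t, ?_⟩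
      · simp only [List.length_append, List.flatten_cons] at hlen
        omega
      · rw [List.append_assoc, hc]
    rcases List.append_eq_append_iff.1 ht with ⟨c, hxc, hc⟩ | ⟨c, hyc, hc⟩
    · by_cases hne : c = []
      · subst hne
        exact key [] (by simpa using hxc.symm) (by simpa using hc)
      · subst hxc
        exact hx.not_prefix hne (List.suffix_append y c) ⟨t, hc⟩
    · exact key c hyc (by simpa using hc.symm)

theorem lcp_prefix_left (x y : List α) : lcp x y <+: x := by
  induction x generalizing y with
  | nil => simp [lcp]
  | cons a x ih =>
    cases y with
    | nil => simp [lcp]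
    | cons b y =>
      by_cases h : a = b
      · simpa [lcp, h] using ih y
      · simp [lcp, h]

theorem lcp_prefix_right (x y : List α) : lcp x y <+: y := by
  induction x generalizing y with
  | nil => simp [lcp]
  | cons a x ih =>
    cases y with
    | nil => simp [lcp]
    | cons b y =>
      by_cases h : a = b
      · simpa [lcp, h] using ih y
      · simp [lcp, h]

end Aux

/-- Lemma `suffix-relationship-basic2`: with `ICFL(w) = (m₁, …, m_k)` and `i < j`
(Lean indices are the 0-based positions of `m_i`, `m_j`), if `x` is a nonempty suffix
of `m_{i-1}` and `y` a nonempty suffix of `m_{j-1}`, then `lcp(x_w, y_w)` is a prefix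
of `y m_j`. -/
theorem stmt17 {α : Type*} [LinearOrder α] (w : List α) (hw : w ≠ [])
    (hwn : ¬ IsInvLyndon w)
    (M : List (List α)) (hM : IsICFL w M)
    (i j : ℕ) (hi0 : 0 < i) (hij : i < j) (hjk : j < M.length)
    (x y : List α) (hx : x ≠ []) (hy : y ≠ [])
    (hxs : x <:+ M[i-1]!) (hys : y <:+ M[j-1]!) :
    lcp (x ++ (M.drop i).flatten) (y ++ (M.drop j).flatten) <+: (y ++ M[j]!) := by
  have hi : i - 1 < M.length := by omega
  have hj : j - 1 < M.length := by omega
  rw [getElem!_pos M (i - 1) hi] at hxs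
  rw [getElem!_pos M (j - 1) hj] at hys
  rw [getElem!_pos M j hjk]
  set B := M[j] with hB
  have hdrop : M.drop j = B :: M.drop (j + 1) := List.drop_eq_getElem_cons hjk
  have hdrop' : M.drop i = (M.drop i).take (j - i) ++ M.drop j := by
    conv_lhs => rw [← List.take_append_drop (j - i) (M.drop i)]
    rw [List.drop_drop, Nat.add_sub_cancel' hij.le]
  have hlt : ∀ a (ha : a < j), SuffixesLt (M[a]'(ha.trans hjk)) B := fun a ha =>
    List.pairwise_iff_getElem.1 hM.pairwise a j (ha.trans hjk) hjk ha
  have hpre : y ++ B <+: y ++ (M.drop j).flatten := by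
    rw [hdrop, List.flatten_cons, ← List.append_assoc]
    exact List.prefix_append _ _
  rcases List.prefix_or_prefix_of_prefix
    (lcp_prefix_right (x ++ (M.drop i).flatten) (y ++ (M.drop j).flatten)) hpre with h | h
  · exact h
  exfalso
  have hcon := h.trans (lcp_prefix_left _ _)
  rw [hdrop', List.flatten_append] at hcon
  refine not_prefix_of_suffixesLt ?_ ?_ ?_ hcon
  · -- `y` is no longer than `m_{j-1}`, which is one of `m_i, …, m_{j-1}`, and `x` is nonempty.
    have hmem : M[j - 1] ∈ (M.drop i).take (j - i) := by
      refine List.mem_iff_getElem.2 ⟨j - 1 - i, by simp; omega, ?_⟩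
      simp only [List.getElem_take, List.getElem_drop]
      congr 1
      omega
    have h₁ : y.length ≤ (M[j - 1]).length := hys.length_le
    have h₂ := (List.sublist_flatten_of_mem hmem).length_le
    have h₃ : 0 < x.length := List.length_pos_iff.2 hx
    omega
  · have h := hlt (i - 1) (by omega)
    exact ⟨h.1, fun u hu hux => h.2 u hu (hux.trans hxs)⟩
  · intro a ha
    obtain ⟨n, hn, rfl⟩ := List.mem_iff_getElem.1 ha
    simp only [List.length_take, List.length_drop] at hn
    simp only [List.getElem_take, List.getElem_drop]
    exact hlt _ (by omega)
end
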